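/- Let Γ be a group and let φ, φ' : Γ → GL_n(ℂ) be group homomorphisms whose images have compact closure in GL_n(ℂ) (bounded image). If φ(γ) and φ'(γ) are conjugate in GL_n(ℂ) for every γ ∈ Γ, then there exists g ∈ GL_n(ℂ) with φ'(γ) = g φ(γ) g⁻¹ for all γ ∈ Γ. -/

import Mathlib

noncomputable section

/-!
The representation of `Γ` on `ℂⁿ` given by a homomorphism with relatively compact image is
semisimple: the projections onto an invariant subspace form a nonempty closed convex set which is
stable under conjugation by the compact group `closure (φ Γ)`, and the Haar average of the orbit of
one such projection is an equivariant projection.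

Semisimple finite-dimensional representations in characteristic zero are determined by their
characters. If there is a nonzero morphism `V → W`, its image can be cancelled from both sides.
Otherwise the projection of `V × W` onto `V` commutes with all endomorphisms of `V × W`, so by
Jacobson density some algebra element acts as `1` on `V` and as `0` on `W`, and comparing traces
gives `dim V = 0`.
-/

section Averaging

open MeasureTheory

theorem exists_mem_forall_apply_eq_of_convex_of_isClosed
    {K E : Type*} [Group K] [TopologicalSpace K] [IsTopologicalGroup K] [CompactSpace K]
    [NormedAddCommGroup E] [NormedSpace ℝ E] [CompleteSpace E]
    (α : K →* E →L[ℝ] E) {C : Set E} (hconv : Convex ℝ C) (hclosed : IsClosed C) {x : E}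
    (hcont : Continuous fun k ↦ α k x) (hmem : ∀ k, α k x ∈ C) :
    ∃ y ∈ C, ∀ k, α k y = y := by
  borelize K
  let μ : Measure K := Measure.haarMeasure ⊤
  have : IsProbabilityMeasure μ := ⟨by simpa [μ] using Measure.haarMeasure_self (G := K) (K₀ := ⊤)⟩
  have hint : Integrable (fun k ↦ α k x) μ :=
    hcont.integrable_of_hasCompactSupport (.of_compactSpace _)
  refine ⟨∫ k, α k x ∂μ, hconv.integral_mem hclosed (.of_forall hmem) hint, fun l ↦ ?_⟩
  calc α l (∫ k, α k x ∂μ) = ∫ k, α l (α k x) ∂μ := ((α l).integral_comp_comm hint).symm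
    _ = ∫ k, α (l * k) x ∂μ := by simp only [map_mul, mul_apply_eq_comp]
    _ = ∫ k, α k x ∂μ := integral_mul_left_eq_self (fun k ↦ α k x) l

variable {R : Type*} [NormedRing R] [NormedAlgebra ℝ R]

variable (R) in
/-- The action of the units of a normed algebra by conjugation, `u ↦ (x ↦ u * x * u⁻¹)`, as a
homomorphism into the continuous linear endomorphisms. -/
def unitsConjCLM : Rˣ →* R →L[ℝ] R where
  toFun u := ContinuousLinearMap.mulLeftRight ℝ R u ↑u⁻¹
  map_one' := by ext; simp
  map_mul' u v := by ext; simp [mul_assoc]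

theorem continuous_unitsConjCLM_apply (x : R) : Continuous fun u ↦ unitsConjCLM R u x :=
  (Units.continuous_val.mul continuous_const).mul (Units.continuous_val.comp continuous_inv)

theorem exists_mem_forall_commute_of_isCompact_closure_range [CompleteSpace R]
    {Γ : Type*} [Group Γ] (φ : Γ →* Rˣ) (hφ : IsCompact (closure (Set.range φ)))
    {C : Set R} (hconv : Convex ℝ C) (hclosed : IsClosed C) (hne : C.Nonempty)
    (hinv : ∀ γ, ∀ p ∈ C, φ γ * p * ↑(φ γ)⁻¹ ∈ C) :
    ∃ p ∈ C, ∀ γ, Commute (φ γ : R) p := by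
  obtain ⟨p, hp⟩ := hne
  let K : Subgroup Rˣ := φ.range.topologicalClosure
  have : CompactSpace K := isCompact_iff_compactSpace.mp hφ
  have hsub : closure (Set.range φ) ⊆ {u | unitsConjCLM R u p ∈ C} :=
    closure_minimal (Set.range_subset_iff.mpr fun γ ↦ hinv γ p hp)
      (hclosed.preimage (continuous_unitsConjCLM_apply p))
  obtain ⟨q, hq, hfix⟩ := exists_mem_forall_apply_eq_of_convex_of_isClosed
    ((unitsConjCLM R).comp K.subtype) hconv hclosed
    ((continuous_unitsConjCLM_apply p).comp continuous_subtype_val) fun u ↦ hsub u.2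
  refine ⟨q, hq, fun γ ↦ ?_⟩
  have hγ : φ γ * q * ↑(φ γ)⁻¹ = q := hfix ⟨φ γ, subset_closure ⟨γ, rfl⟩⟩
  exact (φ γ).mul_inv_eq_iff_eq_mul.mp hγ

end Averaging

section SemisimpleModules

open Module

variable {A V W : Type*} [Ring A] [AddCommGroup V] [Module A V] [AddCommGroup W] [Module A W]

theorem nonempty_linearEquiv_prod_quotient [IsSemisimpleModule A V] (N : Submodule A V) :
    Nonempty (V ≃ₗ[A] N × (V ⧸ N)) := by
  obtain ⟨C, hC⟩ := exists_isCompl N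
  exact ⟨(N.prodEquivOfIsCompl C hC).symm ≪≫ₗ
    (LinearEquiv.refl A N).prodCongr (N.quotientEquivOfIsCompl C hC).symm⟩

theorem isSemisimpleModule_prod [IsSemisimpleModule A V] [IsSemisimpleModule A W] :
    IsSemisimpleModule A (V × W) := by
  have hsup := IsSemisimpleModule.sup (IsSemisimpleModule.range (LinearMap.inl A V W))
    (IsSemisimpleModule.range (LinearMap.inr A V W))
  rw [LinearMap.sup_range_inl_inr] at hsup
  exact .congr Submodule.topEquiv.symm

theorem subsingleton_linearMap_symm [IsSemisimpleModule A V] [IsSemisimpleModule A W]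
    [Subsingleton (V →ₗ[A] W)] : Subsingleton (W →ₗ[A] V) := by
  refine subsingleton_of_forall_eq 0 fun f ↦ ?_
  obtain ⟨s, hs⟩ := IsSemisimpleModule.lifting_property f.rangeRestrict f.surjective_rangeRestrict
    LinearMap.id
  obtain ⟨g, hg⟩ := IsSemisimpleModule.extension_property f.range.subtype
    f.range.injective_subtype s
  have hs0 : s = 0 := by rw [← hg, Subsingleton.elim g 0, LinearMap.zero_comp]
  have hid : (LinearMap.id : f.range →ₗ[A] f.range) = 0 := by rw [← hs, hs0, LinearMap.comp_zero]
  ext w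
  exact congrArg Subtype.val (LinearMap.congr_fun hid (f.rangeRestrict w))

variable (A V W) in
/-- The projection of `V × W` onto `V` as an endomorphism over `Module.End A (V × W)`, for modules
`V` and `W` without nonzero morphisms between them. -/
def projFstOverEnd [Subsingleton (V →ₗ[A] W)] [Subsingleton (W →ₗ[A] V)] :
    End (End A (V × W)) (V × W) where
  toFun x := (x.1, 0)
  map_add' x y := by simp
  map_smul' g x := by
    have hVW : (g (x.1, 0)).2 = 0 := LinearMap.congr_fun
      (Subsingleton.elim (LinearMap.snd A V W ∘ₗ g ∘ₗ LinearMap.inl A V W) 0) x.1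
    have hWV : (g (0, x.2)).1 = 0 := LinearMap.congr_fun
      (Subsingleton.elim (LinearMap.fst A V W ∘ₗ g ∘ₗ LinearMap.inr A V W) 0) x.2
    have hg : g x = g (x.1, 0) + g (0, x.2) := by rw [← map_add]; simp
    ext <;> simp [hVW, hWV, hg]

theorem exists_smul_eq_self_and_smul_eq_zero [IsSemisimpleModule A V] [IsSemisimpleModule A W]
    [Subsingleton (V →ₗ[A] W)] (s : Finset V) (t : Finset W) :
    ∃ a : A, (∀ v ∈ s, a • v = v) ∧ ∀ w ∈ t, a • w = 0 := by
  classical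
  have := isSemisimpleModule_prod (A := A) (V := V) (W := W)
  have : Subsingleton (W →ₗ[A] V) := subsingleton_linearMap_symm
  obtain ⟨a, ha⟩ := jacobson_density (projFstOverEnd A V W)
    (s.image (fun v ↦ (v, 0)) ∪ t.image (fun w ↦ (0, w)))
  refine ⟨a, fun v hv ↦ ?_, fun w hw ↦ ?_⟩
  · exact (congrArg Prod.fst (ha (v, 0) (by simp [hv]))).symm
  · exact (congrArg Prod.snd (ha (0, w) (by simp [hw]))).symm

end SemisimpleModules

section ModuleCharacter

open Module

variable (k : Type*) {A : Type*} (V W : Type*)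

section CommRing

variable [CommRing k] [Ring A] [Algebra k A]
  [AddCommGroup V] [Module k V] [Module A V] [IsScalarTower k A V]
  [AddCommGroup W] [Module k W] [Module A W] [IsScalarTower k A W]

/-- The character of a module `V` over a `k`-algebra `A`: the `k`-linear form sending `a` to the
trace of the action of `a` on `V`. -/
def moduleCharacter : A →ₗ[k] k :=
  LinearMap.trace k V ∘ₗ (Algebra.lsmul k k V).toLinearMap

theorem moduleCharacter_apply (a : A) :
    moduleCharacter k V a = LinearMap.trace k V (Algebra.lsmul k k V a) := rfl

theorem moduleCharacter_prod [Module.Free k V] [Module.Finite k V] [Module.Free k W]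
    [Module.Finite k W] :
    (moduleCharacter k (V × W) : A →ₗ[k] k) = moduleCharacter k V + moduleCharacter k W := by
  ext a
  exact LinearMap.trace_prodMap' (Algebra.lsmul k k V a) (Algebra.lsmul k k W a)

variable {V W} in
theorem moduleCharacter_congr (e : V ≃ₗ[A] W) :
    (moduleCharacter k V : A →ₗ[k] k) = moduleCharacter k W := by
  ext a
  have hconj : (e.restrictScalars k).conj (Algebra.lsmul k k V a) = Algebra.lsmul k k W a := by
    ext w
    simp [LinearEquiv.conj_apply]
  rw [moduleCharacter_apply, moduleCharacter_apply, ← hconj, LinearMap.trace_conj']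

end CommRing

variable {V W}
variable [Field k] [Ring A] [Algebra k A]
  [AddCommGroup V] [Module k V] [Module A V] [IsScalarTower k A V] [FiniteDimensional k V]
  [AddCommGroup W] [Module k W] [Module A W] [IsScalarTower k A W] [FiniteDimensional k W]

theorem finiteDimensional_submodule_of_isScalarTower (N : Submodule A V) : FiniteDimensional k N :=
  inferInstanceAs (FiniteDimensional k (N.restrictScalars k))

theorem finiteDimensional_quotient_of_isScalarTower (N : Submodule A V) :
    FiniteDimensional k (V ⧸ N) :=
  inferInstanceAs (FiniteDimensional k (V ⧸ N.restrictScalars k))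

variable [CharZero k] [IsSemisimpleModule A V] [IsSemisimpleModule A W]

theorem finrank_eq_zero_of_moduleCharacter_eq [Subsingleton (V →ₗ[A] W)]
    (h : (moduleCharacter k V : A →ₗ[k] k) = moduleCharacter k W) : finrank k V = 0 := by
  classical
  let bV := finBasis k V
  let bW := finBasis k W
  obtain ⟨a, haV, haW⟩ := exists_smul_eq_self_and_smul_eq_zero (A := A)
    (Finset.univ.image bV) (Finset.univ.image bW)
  have hV : Algebra.lsmul k k V a = LinearMap.id := bV.ext fun i ↦ haV _ (by simp)
  have hW : Algebra.lsmul k k W a = 0 := bW.ext fun i ↦ haW _ (by simp)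
  simpa [moduleCharacter_apply, hV, hW] using LinearMap.congr_fun h a

theorem nonempty_linearEquiv_of_moduleCharacter_eq
    (h : (moduleCharacter k V : A →ₗ[k] k) = moduleCharacter k W) : Nonempty (V ≃ₗ[A] W) := by
  induction hn : finrank k V using Nat.strong_induction_on generalizing V W with
  | _ n ih =>
  rcases subsingleton_or_nontrivial (V →ₗ[A] W) with _ | _
  · have : Subsingleton (W →ₗ[A] V) := subsingleton_linearMap_symm
    have : Subsingleton V := finrank_zero_iff.mp (finrank_eq_zero_of_moduleCharacter_eq k h)
    have : Subsingleton W := finrank_zero_iff.mp (finrank_eq_zero_of_moduleCharacter_eq k h.symm)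
    exact ⟨.ofSubsingleton V W⟩
  · obtain ⟨f, hf⟩ := exists_ne (0 : V →ₗ[A] W)
    obtain ⟨eV⟩ := nonempty_linearEquiv_prod_quotient f.ker
    obtain ⟨eW⟩ := nonempty_linearEquiv_prod_quotient f.range
    have := finiteDimensional_submodule_of_isScalarTower k f.ker
    have := finiteDimensional_submodule_of_isScalarTower k f.range
    have := finiteDimensional_quotient_of_isScalarTower k f.ker
    have := finiteDimensional_quotient_of_isScalarTower k f.range
    have hlt : finrank k f.ker < n := by
      rw [← hn]
      refine Submodule.finrank_lt (s := f.ker.restrictScalars k) fun htop ↦ hf ?_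
      exact LinearMap.ker_eq_top.mp (by simpa using htop)
    have hker : (moduleCharacter k f.ker : A →ₗ[k] k) = moduleCharacter k (W ⧸ f.range) := by
      rw [moduleCharacter_congr k eV, moduleCharacter_congr k eW, moduleCharacter_prod,
        moduleCharacter_prod, moduleCharacter_congr k f.quotKerEquivRange, add_comm] at h
      exact add_left_cancel h
    obtain ⟨e⟩ := ih _ hlt hker rfl
    exact ⟨eV ≪≫ₗ e.prodCongr f.quotKerEquivRange ≪≫ₗ .prodComm A _ _ ≪≫ₗ eW.symm⟩

end ModuleCharacter

section Representations

variable {k Γ V W : Type*} [Field k] [Monoid Γ]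
  [AddCommGroup V] [Module k V] [AddCommGroup W] [Module k W]

theorem isSemisimpleRepresentation_of_exists_isProj {ρ : Representation k Γ V}
    (h : ∀ U : Subrepresentation ρ, ∃ p : V →ₗ[k] V,
      LinearMap.IsProj U.toSubmodule p ∧ ∀ γ, Commute (ρ γ) p) :
    ρ.IsSemisimpleRepresentation where
  exists_isCompl U := by
    obtain ⟨p, hp, hcomm⟩ := h U
    let f : ρ.IntertwiningMap ρ := ⟨p, fun γ ↦ (hcomm γ).eq.symm⟩
    refine ⟨f.ker, .of_eq ?_ ?_⟩
    · exact Subrepresentation.toSubmodule_injective hp.isCompl.inf_eq_bot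
    · exact Subrepresentation.toSubmodule_injective hp.isCompl.sup_eq_top

theorem isProj_conj_of_isProj_subrepresentation {G : Type*} [Group G] {ρ : Representation k G V}
    (U : Subrepresentation ρ) {p : V →ₗ[k] V} (hp : LinearMap.IsProj U.toSubmodule p) (γ : G) :
    LinearMap.IsProj U.toSubmodule (ρ γ * p * ρ γ⁻¹) where
  map_mem v := U.apply_mem_toSubmodule γ (hp.map_mem (ρ γ⁻¹ v))
  map_id v hv := by
    have hfix : p (ρ γ⁻¹ v) = ρ γ⁻¹ v := hp.map_id _ (U.apply_mem_toSubmodule γ⁻¹ hv)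
    simp [hfix]

theorem moduleCharacter_asModule_single (ρ : Representation k Γ V) (γ : Γ) (c : k) :
    moduleCharacter k ρ.asModule (MonoidAlgebra.single γ c) = c * ρ.character γ := by
  have hact : Algebra.lsmul k k ρ.asModule (MonoidAlgebra.single γ c) = c • ρ γ :=
    LinearMap.ext fun v ↦ ρ.single_smul c γ v
  rw [moduleCharacter_apply, hact]
  exact map_smul (LinearMap.trace k V) c (ρ γ)

theorem nonempty_equiv_of_character_eq [CharZero k]
    [FiniteDimensional k V] [FiniteDimensional k W]
    {ρ : Representation k Γ V} {σ : Representation k Γ W}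
    [hρ : ρ.IsSemisimpleRepresentation] [hσ : σ.IsSemisimpleRepresentation]
    (h : ρ.character = σ.character) : Nonempty (ρ.Equiv σ) := by
  rw [Representation.isSemisimpleRepresentation_iff_isSemisimpleModule_asModule] at hρ hσ
  have hchar : (moduleCharacter k ρ.asModule : MonoidAlgebra k Γ →ₗ[k] k) =
      moduleCharacter k σ.asModule := by
    refine MonoidAlgebra.lhom_ext' fun γ ↦ LinearMap.ext fun c ↦ ?_
    simp [moduleCharacter_asModule_single, h]
  obtain ⟨e⟩ := nonempty_linearEquiv_of_moduleCharacter_eq k hchar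
  let f : ρ.IntertwiningMap σ :=
    (Representation.IntertwiningMap.equivLinearMapAsModule ρ σ).symm e.toLinearMap
  exact ⟨f.ofBijective e.bijective⟩

end Representations

section GeneralLinearGroup

open Matrix

variable {ι Γ k : Type*} [Fintype ι] [DecidableEq ι]

/-- The representation on column vectors given by a homomorphism into a general linear group. -/
def glRepresentation [CommRing k] [Monoid Γ] (φ : Γ →* GL ι k) : Representation k Γ (ι → k) :=
  (Units.coeHom _).comp (GeneralLinearGroup.toLin.toMonoidHom.comp φ)

theorem glRepresentation_apply [CommRing k] [Monoid Γ] (φ : Γ →* GL ι k) (γ : Γ) :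
    glRepresentation φ γ = toLin' (φ γ : Matrix ι ι k) := rfl

theorem character_glRepresentation [Field k] [Monoid Γ] (φ : Γ →* GL ι k) (γ : Γ) :
    (glRepresentation φ).character γ = (φ γ : Matrix ι ι k).trace :=
  trace_toLin'_eq _

theorem exists_conj_of_glRepresentation_equiv [CommRing k] [Monoid Γ] {φ φ' : Γ →* GL ι k}
    (e : (glRepresentation φ).Equiv (glRepresentation φ')) :
    ∃ g : GL ι k, ∀ γ, φ' γ = g * φ γ * g⁻¹ := by
  let T := LinearMap.GeneralLinearGroup.ofLinearEquiv e.toLinearEquiv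
  refine ⟨GeneralLinearGroup.toLin.symm T, fun γ ↦ ?_⟩
  rw [eq_mul_inv_iff_mul_eq]
  apply GeneralLinearGroup.toLin.injective
  rw [map_mul, map_mul, MulEquiv.apply_symm_apply]
  exact Units.ext (e.isIntertwining' γ).symm

theorem nonempty_setOf_isProj_toLin' [Field k] (U : Submodule k (ι → k)) :
    {P : Matrix ι ι k | LinearMap.IsProj U (toLin' P)}.Nonempty := by
  obtain ⟨q, hq⟩ := U.exists_isCompl
  have hproj : LinearMap.IsProj U (U.projection q hq) :=
    ⟨Submodule.projection_apply_mem hq, fun _ ↦ Submodule.projection_apply_of_mem_left hq⟩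
  exact ⟨LinearMap.toMatrix' (U.projection q hq), by simpa using hproj⟩

section Projections

variable [RCLike k] (U : Submodule k (ι → k))

theorem convex_setOf_isProj_toLin' :
    Convex ℝ {P : Matrix ι ι k | LinearMap.IsProj U (toLin' P)} := by
  intro P hP Q hQ a b _ _ hab
  refine ⟨fun x ↦ ?_, fun x hx ↦ ?_⟩
  · simpa [add_mulVec, smul_mulVec] using
      add_mem (U.smul_of_tower_mem a (hP.map_mem x)) (U.smul_of_tower_mem b (hQ.map_mem x))
  · have hPx : P *ᵥ x = x := hP.map_id x hx
    have hQx : Q *ᵥ x = x := hQ.map_id x hx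
    simp [smul_mulVec, hPx, hQx, ← add_smul, hab]

theorem isClosed_setOf_isProj_toLin' :
    IsClosed {P : Matrix ι ι k | LinearMap.IsProj U (toLin' P)} := by
  have hset : {P : Matrix ι ι k | LinearMap.IsProj U (toLin' P)} =
      (⋂ x, {P | P *ᵥ x ∈ U}) ∩ ⋂ x ∈ U, {P | P *ᵥ x = x} := by
    ext P
    simpa using ⟨fun h ↦ ⟨h.map_mem, h.map_id⟩, fun h ↦ ⟨h.1, h.2⟩⟩
  rw [hset]
  refine .inter (isClosed_iInter fun x ↦ ?_) (isClosed_biInter fun x _ ↦ ?_)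
  · exact U.closed_of_finiteDimensional.preimage (by fun_prop)
  · exact isClosed_eq (by fun_prop) continuous_const

end Projections

-- The norm only serves to integrate; it induces the entrywise topology underlying that of `GL ι k`.
open scoped Matrix.Norms.Operator in
theorem isSemisimpleRepresentation_glRepresentation [RCLike k] [Group Γ] (φ : Γ →* GL ι k)
    (hφ : IsCompact (closure (Set.range φ))) :
    (glRepresentation φ).IsSemisimpleRepresentation := by
  refine isSemisimpleRepresentation_of_exists_isProj fun U ↦ ?_
  obtain ⟨P, hP, hcomm⟩ := exists_mem_forall_commute_of_isCompact_closure_range φ hφ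
    (convex_setOf_isProj_toLin' U.toSubmodule) (isClosed_setOf_isProj_toLin' U.toSubmodule)
    (nonempty_setOf_isProj_toLin' U.toSubmodule) fun γ P hP ↦ by
      have hconj := isProj_conj_of_isProj_subrepresentation U hP γ
      rw [glRepresentation_apply, glRepresentation_apply, map_inv, Module.End.mul_eq_comp,
        Module.End.mul_eq_comp, ← toLin'_mul, ← toLin'_mul] at hconj
      exact hconj
  exact ⟨toLin' P, hP, fun γ ↦ (hcomm γ).map toLinAlgEquiv'⟩

theorem statement15_general [RCLike k] [Group Γ] (φ φ' : Γ →* GL ι k)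
    (hb : IsCompact (closure (Set.range φ))) (hb' : IsCompact (closure (Set.range φ')))
    (htrace : ∀ γ, (φ γ : Matrix ι ι k).trace = (φ' γ : Matrix ι ι k).trace) :
    ∃ g : GL ι k, ∀ γ, φ' γ = g * φ γ * g⁻¹ := by
  have := isSemisimpleRepresentation_glRepresentation φ hb
  have := isSemisimpleRepresentation_glRepresentation φ' hb'
  have hchar : (glRepresentation φ).character = (glRepresentation φ').character := by
    funext γ
    rw [character_glRepresentation, character_glRepresentation, htrace]
  obtain ⟨e⟩ := nonempty_equiv_of_character_eq hchar
  exact exists_conj_of_glRepresentation_equiv e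

end GeneralLinearGroup

/-- Pointwise conjugate homomorphisms of a group `Γ` into `GL_n(ℂ)` with bounded image
(compact closure of the image in `GL_n(ℂ)`) are globally conjugate. -/
theorem statement15 (n : ℕ) (Γ : Type) [Group Γ]
    (φ φ' : Γ →* GL (Fin n) ℂ)
    (hb : IsCompact (closure (Set.range (φ : Γ → GL (Fin n) ℂ))))
    (hb' : IsCompact (closure (Set.range (φ' : Γ → GL (Fin n) ℂ))))
    (hloc : ∀ γ : Γ, ∃ g : GL (Fin n) ℂ, φ' γ = g * φ γ * g⁻¹) :
    ∃ g : GL (Fin n) ℂ, ∀ γ : Γ, φ' γ = g * φ γ * g⁻¹ :=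
  statement15_general φ φ' hb hb' fun γ ↦ by
    obtain ⟨g, hg⟩ := hloc γ
    rw [hg, Units.val_mul, Units.val_mul, Matrix.trace_units_conj]

end
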